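/- The SR transformation is sound for every WLL and U-WLL DCTRS R: for every term s ∈ T(F,V) and every term t ∈ T(F̄,V), if ⟨s̄⟩ →*_{SR(R)} t, then s →*_R t̂ (whenever the backtranslation t̂ is defined). -/

import Mathlib

set_option autoImplicit false

/-- First-order terms over a signature `F` and variables `V`. -/
inductive Term (F : Type) (V : Type) : Type where
  | var : V → Term F V
  | app : F → List (Term F V) → Term F V

namespace Term

variable {F V G W : Type}

/-- Application of a substitution. -/
def subst (σ : V → Term F W) : Term F V → Term F W
  | .var x => σ x
  | .app f ts => .app f (ts.attach.map (fun ⟨t, _⟩ => subst σ t))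

/-- Renaming of variables. -/
def rename (g : V → W) (t : Term F V) : Term F W := t.subst (fun x => .var (g x))

/-- Mapping of function symbols. -/
def mapF (g : F → G) : Term F V → Term G V
  | .var x => .var x
  | .app f ts => .app (g f) (ts.attach.map (fun ⟨t, _⟩ => mapF g t))

/-- Number of occurrences of the variable `x` in a term. -/
def count [DecidableEq V] (x : V) : Term F V → ℕ
  | .var y => if y = x then 1 else 0
  | .app _ ts => (ts.attach.map (fun ⟨t, _⟩ => count x t)).sum

/-- The list of variables occurring in a term (with repetitions). -/
def varList : Term F V → List V
  | .var x => [x]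
  | .app _ ts => ts.attach.flatMap (fun ⟨t, _⟩ => varList t)

/-- A term is linear if every variable occurs at most once in it. -/
def Linear [DecidableEq V] (t : Term F V) : Prop := ∀ x : V, t.count x ≤ 1

/-- Well-formedness of a term with respect to an arity assignment. -/
inductive WF (ar : F → ℕ) : Term F V → Prop where
  | var (x : V) : WF ar (.var x)
  | app (f : F) (ts : List (Term F V)) :
      ts.length = ar f → (∀ t ∈ ts, WF ar t) → WF ar (.app f ts)

end Term

/-- Number of occurrences of `x` in a sequence of terms. -/
def seqCount {F V : Type} [DecidableEq V] (x : V) (ts : List (Term F V)) : ℕ :=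
  (ts.map (Term.count x)).sum

/-- An oriented conditional rewrite rule `l → r ⇐ s1 ≈ t1, …, sk ≈ tk`. -/
structure CRule (F V : Type) : Type where
  lhs : Term F V
  rhs : Term F V
  conds : List (Term F V × Term F V)

/-- A conditional term rewriting system: a set of conditional rules. -/
abbrev CTRS (F V : Type) := Set (CRule F V)

namespace CRule

variable {F V W : Type}

/-- The sequence `l, t1, …, tk` of "pattern" terms of a rule. -/
def pats (ρ : CRule F V) : List (Term F V) := ρ.lhs :: ρ.conds.map Prod.snd

/-- The sequence `r, s1, …, sk` of "source" terms of a rule. -/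
def srcs (ρ : CRule F V) : List (Term F V) := ρ.rhs :: ρ.conds.map Prod.fst

/-- Weak left-linearity: `|l,t1,…,tk|_x = 1` for every `x ∈ Var(r,s1,…,sk)`. -/
def WLL [DecidableEq V] (ρ : CRule F V) : Prop :=
  ∀ x : V, 0 < seqCount x ρ.srcs → seqCount x ρ.pats = 1

/-- Determinism: `Var(si) ⊆ Var(l, t1, …, t_{i−1})`. -/
def Det [DecidableEq V] (ρ : CRule F V) : Prop :=
  ∀ i : ℕ, ∀ h : i < ρ.conds.length, ∀ x : V,
    0 < Term.count x (ρ.conds.get ⟨i, h⟩).1 →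
    0 < seqCount x (ρ.lhs :: (ρ.conds.take i).map Prod.snd)

/-- Type 3: `Var(r) ⊆ Var(l, s1, t1, …, sk, tk)`. -/
def Type3 [DecidableEq V] (ρ : CRule F V) : Prop :=
  ∀ x : V, 0 < Term.count x ρ.rhs →
    0 < seqCount x (ρ.lhs :: ρ.conds.flatMap (fun c => [c.1, c.2]))

/-- The left-hand side is a non-variable term. -/
def LhsNonVar (ρ : CRule F V) : Prop := ∀ x : V, ρ.lhs ≠ .var x

/-- Renaming the variables of a rule. -/
def mapV (g : V → W) (ρ : CRule F V) : CRule F W :=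
  ⟨ρ.lhs.rename g, ρ.rhs.rename g, ρ.conds.map (fun c => (c.1.rename g, c.2.rename g))⟩

end CRule

/-- `R` is a deterministic CTRS (of Type 3, left-hand sides non-variable). -/
def IsDCTRS {F V : Type} [DecidableEq V] (R : CTRS F V) : Prop :=
  ∀ ρ ∈ R, ρ.Det ∧ ρ.Type3 ∧ ρ.LhsNonVar

/-- All rules of `R` are weakly left-linear. -/
def IsWLL {F V : Type} [DecidableEq V] (R : CTRS F V) : Prop := ∀ ρ ∈ R, ρ.WLL

/-- Closure of a relation under contexts (rewriting below the root). -/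
inductive CtxStep {F V : Type} (root : Term F V → Term F V → Prop) :
    Term F V → Term F V → Prop where
  | root {s t : Term F V} : root s t → CtxStep root s t
  | congr {f : F} {pre post : List (Term F V)} {s t : Term F V} :
      CtxStep root s t →
      CtxStep root (.app f (pre ++ s :: post)) (.app f (pre ++ t :: post))

/-- A root rewrite step using a rule of `R`, conditions evaluated with `prev`. -/
def RootStep {F V : Type} (R : CTRS F V) (prev : Term F V → Term F V → Prop)
    (s t : Term F V) : Prop :=
  ∃ ρ ∈ R, ∃ σ : V → Term F V,
    s = ρ.lhs.subst σ ∧ t = ρ.rhs.subst σ ∧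
    ∀ c ∈ ρ.conds, Relation.ReflTransGen prev (c.1.subst σ) (c.2.subst σ)

/-- The level-stratified reduction relation `→_{(n),R}`. -/
def LevelStep {F V : Type} (R : CTRS F V) : ℕ → Term F V → Term F V → Prop
  | 0 => fun _ _ => False
  | n + 1 => CtxStep (RootStep R (LevelStep R n))

/-- The reduction relation `→_R = ⋃_{n} →_{(n),R}`. -/
def Red {F V : Type} (R : CTRS F V) (s t : Term F V) : Prop :=
  ∃ n : ℕ, LevelStep R n s t

/-- Many-step reduction `→*_R`. -/
def RedStar {F V : Type} (R : CTRS F V) : Term F V → Term F V → Prop :=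
  Relation.ReflTransGen (Red R)

/-- `n`-fold composition of a relation. -/
def NFold {α : Type} (r : α → α → Prop) : ℕ → α → α → Prop
  | 0 => fun a b => a = b
  | n + 1 => fun a c => ∃ b, r a b ∧ NFold r n b c

/-- One-hole contexts. -/
inductive Ctx (F V : Type) : Type where
  | hole : Ctx F V
  | app : F → List (Term F V) → Ctx F V → List (Term F V) → Ctx F V

/-- Filling the hole of a context with a term. -/
def Ctx.fill {F V : Type} : Ctx F V → Term F V → Term F V
  | .hole, t => t
  | .app f pre C post, t => .app f (pre ++ C.fill t :: post)
/-- Signature extended with the fresh symbols `U^ρ_i`. -/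
abbrev UF (F V : Type) := F ⊕ (CRule F V × ℕ)

/-- Embedding of terms over `F` into terms over the extended signature `U_R(F)`. -/
def liftF {F V : Type} (t : Term F V) : Term (UF F V) V := t.mapF Sum.inl

/-- The list `X⃗_i` enumerating `Var(l, t1, …, t_{i−1})` in a fixed order. -/
def Xlist {F V : Type} [DecidableEq V] (ρ : CRule F V) (i : ℕ) : List V :=
  (ρ.lhs.varList ++ ((ρ.conds.take (i - 1)).map Prod.snd).flatMap Term.varList).dedup

/-- A dummy condition (used as a default, never relevant). -/
def dummyCond {F V : Type} (ρ : CRule F V) : Term F V × Term F V := (ρ.lhs, ρ.lhs)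

/-- The term `U^ρ_i(t, X⃗_i)`. -/
def uterm {F V : Type} [DecidableEq V] (ρ : CRule F V) (i : ℕ) (t : Term F V) :
    Term (UF F V) V :=
  .app (Sum.inr (ρ, i)) (liftF t :: (Xlist ρ i).map Term.var)

/-- Left-hand side of the `j`-th unraveled rule of `ρ` (j = 0, …, k). -/
def ulhs {F V : Type} [DecidableEq V] (ρ : CRule F V) (j : ℕ) : Term (UF F V) V :=
  if j = 0 then liftF ρ.lhs
  else uterm ρ j (ρ.conds.getD (j - 1) (dummyCond ρ)).2

/-- Right-hand side of the `j`-th unraveled rule of `ρ` (j = 0, …, k). -/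
def urhs {F V : Type} [DecidableEq V] (ρ : CRule F V) (j : ℕ) : Term (UF F V) V :=
  if j = ρ.conds.length then liftF ρ.rhs
  else uterm ρ (j + 1) (ρ.conds.getD j (dummyCond ρ)).1

/-- The unconditional rules `U(ρ)` obtained by unraveling the rule `ρ`. -/
def URules {F V : Type} [DecidableEq V] (ρ : CRule F V) : Set (CRule (UF F V) V) :=
  { r | ∃ j ≤ ρ.conds.length, r = ⟨ulhs ρ j, urhs ρ j, []⟩ }

/-- The simultaneous unraveling `U(R)` of a DCTRS `R`. -/
def USys {F V : Type} [DecidableEq V] (R : CTRS F V) : CTRS (UF F V) V :=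
  ⋃ ρ ∈ R, URules ρ

/-- `R` is ultra-WLL (`U`-WLL): every rule of `U(R)` is WLL. -/
def IsUWLL {F V : Type} [DecidableEq V] (R : CTRS F V) : Prop :=
  ∀ r ∈ USys R, r.WLL
/-- Variables used for terms over the extended signature `F̄`: original
variables plus a countable supply of fresh variables. -/
abbrev WVar (V : Type) := V ⊕ ℕ

/-- The extended signature `F̄` of the SR transformation: the original symbols
(`c̄` for constructors, `f̄` for defined symbols, with extra arguments appended),
the fresh constant `⊥`, the fresh unary symbol `⟨·⟩`, and the fresh tuple
symbols `[ ]^ρ_j`. -/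
inductive SSym (F V : Type) : Type where
  | orig : F → SSym F V
  | bot : SSym F V
  | guard : SSym F V
  | tup : CRule F V → ℕ → SSym F V

/-- Terms over the extended signature `F̄`. -/
abbrev STerm (F V : Type) := Term (SSym F V) (WVar V)

/-- The fresh constant `⊥`. -/
def botT {F V : Type} : STerm F V := .app .bot []

/-- The fresh unary symbol `⟨·⟩`. -/
def guardT {F V : Type} (t : STerm F V) : STerm F V := .app .guard [t]

/-- `t̄`: the embedding of `t ∈ T(F,V)` into `T(F̄,V)` in which all the extra
arguments of defined symbols are filled with `⊥`.  Here `mOf f` is the number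
of conditional `f`-rules (0 for constructors). -/
def barT {F V : Type} (mOf : F → ℕ) : Term F V → STerm F V
  | .var x => .var (Sum.inl x)
  | .app f ts =>
      .app (.orig f)
        ((ts.attach.map (fun ⟨t, _⟩ => barT mOf t)) ++ List.replicate (mOf f) botT)

mutual
/-- `ext(t)`: the embedding of `t ∈ T(F,V)` into `T(F̄,V)` in which the extra
arguments of defined symbols are filled with distinct fresh variables; a
counter is threaded through to keep the fresh variables distinct. -/
def extT {F V : Type} (mOf : F → ℕ) : Term F V → ℕ → STerm F V × ℕ
  | .var x, c => (.var (Sum.inl x), c)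
  | .app f ts, c =>
      let p := extTList mOf ts c
      (.app (.orig f)
         (p.1 ++ (List.range (mOf f)).map (fun k => .var (Sum.inr (p.2 + k)))),
       p.2 + mOf f)

/-- `ext` on lists of terms, threading the fresh-variable counter. -/
def extTList {F V : Type} (mOf : F → ℕ) : List (Term F V) → ℕ → List (STerm F V) × ℕ
  | [], c => ([], c)
  | t :: ts, c =>
      let p := extT mOf t c
      let q := extTList mOf ts p.2
      (p.1 :: q.1, q.2)
end

/-- The backtranslation `t̂`: the partial mapping erasing `⟨·⟩` and the extra
arguments of defined symbols, recovering a term over `F`. -/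
def hatT {F V : Type} (ar : F → ℕ) : STerm F V → Option (Term F V)
  | .var (Sum.inl x) => some (.var x)
  | .var (Sum.inr _) => none
  | .app (.orig f) ts =>
      Option.map (Term.app f)
        ((ts.take (ar f)).attach.mapM (fun t => hatT ar t.1))
  | .app .guard [t] => hatT ar t
  | .app _ _ => none
decreasing_by
  · have h1 : t.1 ∈ ts := List.mem_of_mem_take t.2
    have := List.sizeOf_lt_of_mem h1
    simp only [Term.app.sizeOf_spec]
    omega
  · simp
    omega

/-- Embedding of `T(F,V)` into the terms over the unraveling signature
`U_R(F)` with extended variables. -/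
def liftUV {F V : Type} (t : Term F V) : Term (UF F V) (WVar V) :=
  (t.mapF Sum.inl).rename Sum.inl
/-- The list `V⃗_j` enumerating `Var(t1, …, t_{j−1})` in a fixed order. -/
def Vlist {F V : Type} [DecidableEq V] (ρ : CRule F V) (j : ℕ) : List V :=
  (((ρ.conds.take (j - 1)).map Prod.snd).flatMap Term.varList).dedup

/-- The term `[⟨inner⟩, V⃗_j]^ρ_j` (used in the rewrite rules of `SR(R)`). -/
def tupT {F V : Type} [DecidableEq V] (ρ : CRule F V) (j : ℕ) (inner : STerm F V) :
    STerm F V :=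
  .app (.tup ρ j) (guardT inner :: (Vlist ρ j).map (fun v => .var (Sum.inl v)))

/-- The `j`-th unconditional rule (j = 0, …, k) obtained by the SR
transformation from the `i`-th conditional `f`-rule
`ρ : f(w1,…,wn) → r ⇐ s1 ≈ t1, …, sk ≈ tk` (where `i = idx ρ`). -/
def condSRRule {F V : Type} [DecidableEq V] (mOf : F → ℕ) (idx : CRule F V → ℕ)
    (ρ : CRule F V) (j : ℕ) : CRule (SSym F V) (WVar V) :=
  match ρ.lhs with
  | .var _ => ⟨barT mOf ρ.lhs, barT mOf ρ.rhs, []⟩  -- irrelevant (lhs is never a variable)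
  | .app f ws =>
    let i := idx ρ
    let m := mOf f
    let p := extTList mOf ws 0
    let ws' := p.1
    let c0 := p.2
    let slot : STerm F V → List (STerm F V) := fun mid =>
      (List.range m).map (fun q => if q = i - 1 then mid else .var (Sum.inr (c0 + q)))
    let k := ρ.conds.length
    ⟨(if j = 0 then
        Term.app (SSym.orig f) (ws' ++ slot botT)
      else
        Term.app (SSym.orig f)
          (ws' ++ slot (tupT ρ j (extT mOf (ρ.conds.getD (j - 1) (dummyCond ρ)).2 (c0 + m)).1))),
     (if j = k then
        guardT (barT mOf ρ.rhs)
      else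
        Term.app (SSym.orig f)
          (ws' ++ slot (tupT ρ (j + 1) (barT mOf (ρ.conds.getD j (dummyCond ρ)).1)))),
     []⟩

/-- The unconditional rule `ext(l) → ⟨r̄⟩` obtained by the SR transformation
from an unconditional rule `l → r`. -/
def uncondSRRule {F V : Type} (mOf : F → ℕ) (ρ : CRule F V) : CRule (SSym F V) (WVar V) :=
  ⟨(extT mOf ρ.lhs 0).1, guardT (barT mOf ρ.rhs), []⟩

/-- The auxiliary rule `⟨⟨x⟩⟩ → ⟨x⟩`. -/
def auxGuard {F V : Type} : CRule (SSym F V) (WVar V) :=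
  ⟨guardT (guardT (.var (Sum.inr 0))), guardT (.var (Sum.inr 0)), []⟩

/-- The auxiliary rule shifting `⟨·⟩` upward over the `i`-th argument of the
symbol `f` (and resetting the extra arguments of defined symbols):
`f̄(x1,…,⟨xi⟩,…,xn, z1,…,zm) → ⟨f̄(x1,…,xn, ⊥,…,⊥)⟩`. -/
def auxShift {F V : Type} (ar mOf : F → ℕ) (f : F) (i : ℕ) : CRule (SSym F V) (WVar V) :=
  ⟨Term.app (SSym.orig f)
     (((List.range (ar f)).map
         (fun q => if q = i then guardT (.var (Sum.inr q)) else .var (Sum.inr q))) ++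
      (List.range (mOf f)).map (fun q => .var (Sum.inr (ar f + q)))),
   guardT (Term.app (SSym.orig f)
     (((List.range (ar f)).map (fun q => Term.var (Sum.inr q))) ++
      List.replicate (mOf f) botT)),
   []⟩

/-- The SR transformation `SR(R)`: the unconditional TRS over `F̄` consisting of
the transformed rules of `R` together with the auxiliary rules `R_aux`. -/
def SRSys {F V : Type} [DecidableEq V] (R : CTRS F V) (ar mOf : F → ℕ)
    (idx : CRule F V → ℕ) : CTRS (SSym F V) (WVar V) :=
  { r | (∃ ρ ∈ R, ρ.conds = [] ∧ r = uncondSRRule mOf ρ) ∨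
        (∃ ρ ∈ R, ρ.conds ≠ [] ∧ ∃ j ≤ ρ.conds.length, r = condSRRule mOf idx ρ j) ∨
        r = auxGuard ∨
        (∃ (f : F) (i : ℕ), i < ar f ∧ r = auxShift ar mOf f i) }

/-- Well-formedness of the data `(ar, mOf, idx)` describing the signature `F`
(with arities `ar`), the number `mOf f` of conditional `f`-rules of `R`, and
the ranking `idx` of the conditional rules of each defined symbol by some
arbitrary but fixed order. -/
def GoodSetup {F V : Type} [DecidableEq V] (R : CTRS F V) (ar mOf : F → ℕ)
    (idx : CRule F V → ℕ) : Prop :=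
  (∀ ρ ∈ R, ρ.lhs.WF ar ∧ ρ.rhs.WF ar ∧ ∀ c ∈ ρ.conds, c.1.WF ar ∧ c.2.WF ar) ∧
  (∀ ρ ∈ R, ∃ (f : F) (ws : List (Term F V)), ρ.lhs = Term.app f ws) ∧
  (∀ ρ ∈ R, ρ.conds ≠ [] →
     ∀ (f : F) (ws : List (Term F V)), ρ.lhs = Term.app f ws →
       1 ≤ idx ρ ∧ idx ρ ≤ mOf f) ∧
  (∀ ρ₁, ρ₁ ∈ R → ∀ ρ₂, ρ₂ ∈ R → ρ₁.conds ≠ [] → ρ₂.conds ≠ [] →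
     ∀ (f : F) (ws₁ ws₂ : List (Term F V)),
       ρ₁.lhs = Term.app f ws₁ → ρ₂.lhs = Term.app f ws₂ →
       idx ρ₁ = idx ρ₂ → ρ₁ = ρ₂) ∧
  (∀ (f : F) (i : ℕ), 1 ≤ i → i ≤ mOf f →
     ∃ ρ ∈ R, ρ.conds ≠ [] ∧ (∃ ws : List (Term F V), ρ.lhs = Term.app f ws) ∧ idx ρ = i)
/-- The unraveled system `U(R)` with its rules considered over the extended
variable set `WVar V` (so that it rewrites the terms in the image of `Φ`). -/
def USysW {F V : Type} [DecidableEq V] (R : CTRS F V) : CTRS (UF F V) (WVar V) :=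
  { r | ∃ r' ∈ USys R, r = r'.mapV Sum.inl }

/-- Membership in the set `Φ(t)`: `PhiMem R ar mOf idx t u` states that
`u ∈ Φ(t)`, where `Φ` is the mapping (defined mutually with the auxiliary
mapping `Ψ`) from reachable terms of `T(F̄,V)` to sets of terms of
`T(U_R(F),V)`:
* `Φ(x) = {x}` for a variable `x`;
* `Φ(⟨t⟩) = Φ(t)`;
* for an original symbol `f` applied to arguments `ts`, `Φ` contains
  `f(t'1,…,t'n)` for all `t'p ∈ Φ(tp)` of the first `ar f` arguments (this is
  the clause for constructors and the clause `Ψ(f̄(t⃗,⊥,…,⊥))` for defined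
  symbols), and
* for each `i`-th extra argument of a defined symbol `f` that is a tuple
  `[⟨t'⟩, t'1,…,t'_{nj}]^ρ_j` (where `ρ` is the `i`-th conditional `f`-rule),
  `Φ` contains all terms `U^ρ_j(u', u⃗')` with `u' ∈ Φ(t')` and
  `u⃗' ∈ Φ(σ(X⃗j))`, where `σ` is a substitution with `σ(V⃗j) = t'1,…,t'_{nj}`
  and `σ(ext(w1),…,ext(wn))` equal to the main arguments of the node. -/
inductive PhiMem {F V : Type} [DecidableEq V] (R : CTRS F V) (ar mOf : F → ℕ)
    (idx : CRule F V → ℕ) : STerm F V → Term (UF F V) (WVar V) → Prop where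
  | var (x : WVar V) : PhiMem R ar mOf idx (.var x) (.var x)
  | guard {t : STerm F V} {u : Term (UF F V) (WVar V)} :
      PhiMem R ar mOf idx t u → PhiMem R ar mOf idx (guardT t) u
  | orig {f : F} {ts : List (STerm F V)} {us : List (Term (UF F V) (WVar V))} :
      us.length = (ts.take (ar f)).length →
      (∀ p ∈ List.zip (ts.take (ar f)) us, PhiMem R ar mOf idx p.1 p.2) →
      PhiMem R ar mOf idx (.app (.orig f) ts) (.app (Sum.inl f) us)
  | cond {f : F} {ts : List (STerm F V)} {ρ : CRule F V} {ws : List (Term F V)}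
      {j : ℕ} {tin : STerm F V} {vargs : List (STerm F V)}
      {σ : WVar V → STerm F V} {u : Term (UF F V) (WVar V)}
      {us : List (Term (UF F V) (WVar V))} :
      ρ ∈ R → ρ.conds ≠ [] → ρ.lhs = .app f ws →
      1 ≤ j → j ≤ ρ.conds.length →
      (ts.drop (ar f))[idx ρ - 1]? = some (.app (.tup ρ j) (guardT tin :: vargs)) →
      (Vlist ρ j).map (fun v => σ (Sum.inl v)) = vargs →
      (extTList mOf ws 0).1.map (Term.subst σ) = ts.take (ar f) →
      PhiMem R ar mOf idx tin u →
      us.length = (Xlist ρ j).length →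
      (∀ p ∈ List.zip (Xlist ρ j) us, PhiMem R ar mOf idx (σ (Sum.inl p.1)) p.2) →
      PhiMem R ar mOf idx (.app (.orig f) ts) (.app (Sum.inr (ρ, j)) (u :: us))

/-- The set `Φ(t)`. -/
def Phi {F V : Type} [DecidableEq V] (R : CTRS F V) (ar mOf : F → ℕ)
    (idx : CRule F V → ℕ) (t : STerm F V) : Set (Term (UF F V) (WVar V)) :=
  { u | PhiMem R ar mOf idx t u }

/-- `σ' ∈ Φ(σ)`, the extension of `Φ` to substitutions:
`Dom(σ') ⊆ Dom(σ)` and `xσ' ∈ Φ(xσ)` for every `x ∈ Dom(σ)`. -/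
def PhiSub {F V : Type} [DecidableEq V] (R : CTRS F V) (ar mOf : F → ℕ)
    (idx : CRule F V → ℕ) (σ : WVar V → STerm F V)
    (σ' : WVar V → Term (UF F V) (WVar V)) : Prop :=
  ∀ x : WVar V, PhiMem R ar mOf idx (σ x) (σ' x)

/-- The relation `s ⇝ t`: for each `t' ∈ Φ(t)` there exists `s' ∈ Φ(s)` with
`s' →*_{U(R)} t'`. -/
def Leadsto {F V : Type} [DecidableEq V] (R : CTRS F V) (ar mOf : F → ℕ)
    (idx : CRule F V → ℕ) (s t : STerm F V) : Prop :=
  ∀ u, PhiMem R ar mOf idx t u →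
    ∃ u', PhiMem R ar mOf idx s u' ∧ RedStar (USysW R) u' u

/-- A term of `T(F̄,V)` is reachable if it is a subterm of some term reachable
by `SR(R)` from `⟨s̄⟩` for some `s ∈ T(F,V)`. -/
def SRReachable {F V : Type} [DecidableEq V] (R : CTRS F V) (ar mOf : F → ℕ)
    (idx : CRule F V → ℕ) (t : STerm F V) : Prop :=
  ∃ (s : Term F V) (C : Ctx (SSym F V) (WVar V)),
    s.WF ar ∧ RedStar (SRSys R ar mOf idx) (guardT (barT mOf s)) (C.fill t)

/-- The restriction `σ|_X` of a substitution to the variables of a term `t`. -/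
def restrictTo {F V : Type} [DecidableEq V] (σ : WVar V → STerm F V) (t : STerm F V) :
    WVar V → STerm F V :=
  fun x => if 0 < t.count x then σ x else .var x


set_option linter.unusedSectionVars false
namespace SRS
variable {F V W G : Type}

theorem tind {P : Term F V → Prop} (hv : ∀ x, P (.var x))
    (ha : ∀ f ts, (∀ t ∈ ts, P t) → P (.app f ts)) : ∀ t, P t
  | .var x => hv x
  | .app f ts => ha f ts (fun t _ => tind hv ha t)
termination_by t => sizeOf t
decreasing_by
  have := List.sizeOf_lt_of_mem ‹t ∈ ts›
  simp only [Term.app.sizeOf_spec]; omega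

theorem subst_var (σ : V → Term F W) (x : V) : (Term.var x : Term F V).subst σ = σ x := by
  rw [Term.subst]

theorem subst_app (σ : V → Term F W) (f : F) (ts : List (Term F V)) :
    (Term.app f ts).subst σ = .app f (ts.map (Term.subst σ)) := by
  rw [Term.subst]; simp

theorem mapF_app (g : F → G) (f : F) (ts : List (Term F V)) :
    (Term.app f ts).mapF g = .app (g f) (ts.map (Term.mapF g)) := by
  rw [Term.mapF]; simp

theorem varList_app (f : F) (ts : List (Term F V)) :
    (Term.app f ts).varList = ts.flatMap Term.varList := by
  rw [Term.varList]; simp [List.flatMap]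

theorem count_app [DecidableEq V] (x : V) (f : F) (ts : List (Term F V)) :
    (Term.app f ts).count x = (ts.map (Term.count x)).sum := by
  rw [Term.count]; simp

theorem count_eq [DecidableEq V] (x : V) (t : Term F V) :
    t.count x = t.varList.count x := by
  induction t using tind with
  | hv y => simp [Term.count, Term.varList, List.count_singleton]
  | ha f ts ih =>
    rw [count_app, varList_app, List.count_flatMap]
    congr 1
    apply List.map_congr_left
    intro t ht; exact ih t ht

theorem count_mapF [DecidableEq V] (x : V) (g : F → G) (t : Term F V) :
    (t.mapF g).count x = t.count x := by
  induction t using tind with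
  | hv y => simp [Term.count, Term.mapF]
  | ha f ts ih =>
    rw [mapF_app, count_app, count_app, List.map_map]
    congr 1
    apply List.map_congr_left
    intro t ht; exact ih t ht

theorem count_pos [DecidableEq V] {x : V} {t : Term F V} : 0 < t.count x ↔ x ∈ t.varList := by
  rw [count_eq]; exact List.count_pos_iff

theorem seqCount_eq [DecidableEq V] (x : V) (ts : List (Term F V)) :
    seqCount x ts = (ts.flatMap Term.varList).count x := by
  rw [seqCount, List.count_flatMap]
  congr 1
  apply List.map_congr_left
  intro t _; exact count_eq x t

theorem subst_congr {σ τ : V → Term F W} {t : Term F V} (h : ∀ x ∈ t.varList, σ x = τ x) :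
    t.subst σ = t.subst τ := by
  induction t using tind with
  | hv y => rw [subst_var, subst_var]; exact h y (by simp [Term.varList])
  | ha f ts ih =>
    rw [subst_app, subst_app]
    congr 1
    apply List.map_congr_left
    intro t ht
    refine ih t ht (fun x hx => h x ?_)
    rw [varList_app]; exact List.mem_flatMap.2 ⟨t, ht, hx⟩

theorem subst_id (t : Term F V) : t.subst Term.var = t := by
  induction t using tind with
  | hv y => rw [subst_var]
  | ha f ts ih =>
    rw [subst_app]
    congr 1
    conv_rhs => rw [← List.map_id ts]
    apply List.map_congr_left
    intro t ht; exact ih t ht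

/-! Reductions -/

theorem ctx_mono {r r' : Term F V → Term F V → Prop} (h : ∀ a b, r a b → r' a b) {a b}
    (hab : CtxStep r a b) : CtxStep r' a b := by
  induction hab with
  | root h' => exact .root (h _ _ h')
  | congr _ ih => exact .congr ih

theorem rtg_mono {α : Type} {r p : α → α → Prop} (h : ∀ a b, r a b → p a b) {a b : α}
    (hab : Relation.ReflTransGen r a b) : Relation.ReflTransGen p a b := by
  induction hab with
  | refl => exact .refl
  | tail _ h' ih => exact ih.tail (h _ _ h')

theorem level_mono_succ (R : CTRS F V) (n : ℕ) : ∀ a b, LevelStep R n a b → LevelStep R (n+1) a b := by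
  induction n with
  | zero => intro a b h; exact h.elim
  | succ n ih =>
    intro a b h
    refine ctx_mono ?_ h
    rintro a b ⟨ρ, hρ, σ, h1, h2, h3⟩
    exact ⟨ρ, hρ, σ, h1, h2, fun c hc => rtg_mono ih (h3 c hc)⟩

theorem level_mono (R : CTRS F V) {n m : ℕ} (h : n ≤ m) : ∀ a b, LevelStep R n a b → LevelStep R m a b := by
  induction h with
  | refl => intro a b h; exact h
  | step _ ih => intro a b h; exact level_mono_succ R _ _ _ (ih a b h)

theorem red_level {R : CTRS F V} {a b : Term F V} (h : RedStar R a b) :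
    ∃ n, Relation.ReflTransGen (LevelStep R n) a b := by
  induction h with
  | refl => exact ⟨0, .refl⟩
  | tail _ h ih =>
    obtain ⟨n, hn⟩ := ih
    obtain ⟨m, hm⟩ := h
    exact ⟨max n m, (rtg_mono (level_mono R (le_max_left _ _)) hn).tail
      (level_mono R (le_max_right _ _) _ _ hm)⟩

theorem red_rule {R : CTRS F V} {ρ : CRule F V} (hρ : ρ ∈ R) (σ : V → Term F V)
    (h : ∀ c ∈ ρ.conds, RedStar R (c.1.subst σ) (c.2.subst σ)) :
    RedStar R (ρ.lhs.subst σ) (ρ.rhs.subst σ) := by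
  have : ∃ n, ∀ c ∈ ρ.conds, Relation.ReflTransGen (LevelStep R n) (c.1.subst σ) (c.2.subst σ) := by
    generalize ρ.conds = cs at h
    induction cs with
    | nil => exact ⟨0, by simp⟩
    | cons c cs ih =>
      obtain ⟨n, hn⟩ := ih (fun c hc => h c (by simp [hc]))
      obtain ⟨m, hm⟩ := red_level (h c (by simp))
      refine ⟨max n m, ?_⟩
      intro c' hc'
      rcases List.mem_cons.1 hc' with rfl | hc'
      · exact rtg_mono (level_mono R (le_max_right _ _)) hm
      · exact rtg_mono (level_mono R (le_max_left _ _)) (hn c' hc')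
  obtain ⟨n, hn⟩ := this
  exact .single ⟨n+1, .root ⟨ρ, hρ, σ, rfl, rfl, hn⟩⟩

theorem red_ctx {R : CTRS F V} {a b : Term F V} (f : F) (pre post : List (Term F V))
    (h : RedStar R a b) : RedStar R (.app f (pre ++ a :: post)) (.app f (pre ++ b :: post)) := by
  induction h with
  | refl => exact .refl
  | tail _ h ih =>
    obtain ⟨n, hn⟩ := h
    refine ih.tail ⟨n, ?_⟩
    cases n with
    | zero => exact hn.elim
    | succ n => exact .congr hn

theorem red_args' {R : CTRS F V} (f : F) : ∀ (us vs pre : List (Term F V)),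
    us.length = vs.length →
    (∀ (i : ℕ) a b, us[i]? = some a → vs[i]? = some b → RedStar R a b) →
    RedStar R (.app f (pre ++ us)) (.app f (pre ++ vs))
  | [], [], pre, _, _ => .refl
  | u :: us, v :: vs, pre, hl, h => by
    have h1 := red_ctx f pre us (h 0 u v rfl rfl)
    have h2 := red_args' f us vs (pre ++ [v]) (by simpa using hl)
      (fun i a b ha hb => h (i+1) a b (by simpa using ha) (by simpa using hb))
    refine h1.trans ?_
    simpa [RedStar] using h2

theorem red_args {R : CTRS F V} (f : F) (us vs : List (Term F V))
    (hl : us.length = vs.length)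
    (h : ∀ (i : ℕ) a b, us[i]? = some a → vs[i]? = some b → RedStar R a b) :
    RedStar R (.app f us) (.app f vs) := red_args' f us vs [] hl h

theorem red_subst {R : CTRS F V} {σ τ : V → Term F V} {t : Term F V}
    (h : ∀ x ∈ t.varList, RedStar R (σ x) (τ x)) : RedStar R (t.subst σ) (t.subst τ) := by
  induction t using tind with
  | hv y => rw [subst_var, subst_var]; exact h y (by simp [Term.varList])
  | ha f ts ih =>
    rw [subst_app, subst_app]
    apply red_args
    · simp
    · intro i a b ha hb
      rw [List.getElem?_map] at ha hb
      cases hi : ts[i]? with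
      | none => simp [hi] at ha
      | some t =>
        simp only [hi, Option.map_some, Option.some.injEq] at ha hb
        subst ha hb
        have ht := List.mem_of_getElem? hi
        refine ih t ht (fun x hx => h x ?_)
        rw [varList_app]; exact List.mem_flatMap.2 ⟨t, ht, hx⟩

/-! The simulation relation -/

/-- matching of a pattern, ignoring extra arguments -/
inductive InPat (ar : F → ℕ) : Term F V → STerm F V → V → STerm F V → Prop where
  | var (x : V) (t : STerm F V) : InPat ar (.var x) t x t
  | app {f : F} {ws : List (Term F V)} {ts : List (STerm F V)} {i : ℕ} {w : Term F V}
      {t t' : STerm F V} {x : V} :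
      i < ar f → ws[i]? = some w → ts[i]? = some t → InPat ar w t x t' →
      InPat ar (.app f ws) (.app (.orig f) ts) x t'

mutual
inductive O [DecidableEq V] (R : CTRS F V) (ar mOf : F → ℕ) : Term F V → STerm F V → Prop where
  | var {u : Term F V} {x : V} : RedStar R u (.var x) → O R ar mOf u (.var (Sum.inl x))
  | guard {u : Term F V} {t : STerm F V} : O R ar mOf u t → O R ar mOf u (.app .guard [t])
  | orig {u : Term F V} {f : F} {us : List (Term F V)} {args : List (STerm F V)} :
      us.length = ar f → args.length = ar f + mOf f → RedStar R u (.app f us) →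
      (∀ (i : ℕ) a b, us[i]? = some a → args[i]? = some b → O R ar mOf a b) →
      (∀ (q : ℕ) e, ar f ≤ q → args[q]? = some e → Slot R ar mOf u (.app (.orig f) args) e) →
      O R ar mOf u (.app (.orig f) args)
inductive Slot [DecidableEq V] (R : CTRS F V) (ar mOf : F → ℕ) :
    Term F V → STerm F V → STerm F V → Prop where
  | bot {u : Term F V} {t : STerm F V} : Slot R ar mOf u t botT
  | tup {u : Term F V} {t : STerm F V} {ρ : CRule F V} {j : ℕ} {σ : V → Term F V}
      {e0 : STerm F V} {vs : List (STerm F V)} :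
      ρ ∈ R → j < ρ.conds.length →
      RedStar R u (ρ.lhs.subst σ) →
      (∀ i < j, ∀ c, ρ.conds[i]? = some c → RedStar R (c.1.subst σ) (c.2.subst σ)) →
      (∀ c, ρ.conds[j]? = some c → O R ar mOf (c.1.subst σ) e0) →
      (∀ (i : ℕ) v e, (Vlist ρ (j+1))[i]? = some v → vs[i]? = some e → O R ar mOf (σ v) e) →
      (∀ x b, InPat ar ρ.lhs t x b → O R ar mOf (σ x) b) →
      Slot R ar mOf u t (.app (.tup ρ (j+1)) (e0 :: vs))
end

theorem sizeOf_getElem? {α : Type} [SizeOf α] {l : List α} {i : ℕ} {a : α} (h : l[i]? = some a) :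
    sizeOf a < sizeOf l := List.sizeOf_lt_of_mem (List.mem_of_getElem? h)

theorem inPat_size {ar : F → ℕ} {w : Term F V} {t : STerm F V} {x b} (h : InPat ar w t x b) :
    sizeOf b ≤ sizeOf t ∧ ((∃ f ws, w = .app f ws) → sizeOf b < sizeOf t) := by
  induction h with
  | var x t => simp
  | app _ _ h _ ih =>
    have := sizeOf_getElem? h
    simp only [Term.app.sizeOf_spec]
    constructor
    · omega
    · intro _; omega

theorem inPat_mem {ar : F → ℕ} {w : Term F V} {t : STerm F V} {x b} (h : InPat ar w t x b) :
    x ∈ w.varList := by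
  induction h with
  | var x t => simp [Term.varList]
  | app _ h _ _ ih =>
    rw [varList_app]; exact List.mem_flatMap.2 ⟨_, List.mem_of_getElem? h, ih⟩

section
variable [DecidableEq V] {R : CTRS F V} {ar mOf : F → ℕ}

theorem Slot_back {u u' : Term F V} {t e : STerm F V} (hr : RedStar R u' u)
    (h : Slot R ar mOf u t e) : Slot R ar mOf u' t e := by
  cases h with
  | bot => exact .bot
  | tup h1 h2 h3 h4 h5 h6 h7 => exact .tup h1 h2 (hr.trans h3) h4 h5 h6 h7

theorem O_back {t : STerm F V} : ∀ {u u' : Term F V} (_ : RedStar R u' u)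
    (_ : O R ar mOf u t), O R ar mOf u' t := by
  induction t using tind with
  | hv x => intro u u' hr h; cases h with
    | var h => exact .var (hr.trans h)
  | ha f ts ih =>
    intro u u' hr h
    cases h with
    | guard h => exact .guard (ih _ (by simp) hr h)
    | orig h1 h2 h3 h4 h5 =>
      exact .orig h1 h2 (hr.trans h3) h4 (fun q e hq he => Slot_back hr (h5 q e hq he))

theorem hat_orig (f : F) (ts : List (STerm F V)) :
    hatT ar (.app (.orig f) ts) = Option.map (Term.app f) ((ts.take (ar f)).mapM (hatT ar)) := by
  rw [hatT]
  congr 1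
  simp

theorem mapM_some {α β : Type} (g : α → Option β) : ∀ (l : List α) (l' : List β),
    l.length = l'.length → (∀ (i : ℕ) a b, l[i]? = some a → l'[i]? = some b → g a = some b) →
    l.mapM g = some l'
  | [], [], _, _ => by simp
  | a :: l, b :: l', hl, h => by
    have h1 := h 0 a b rfl rfl
    have h2 := mapM_some g l l' (by simpa using hl)
      (fun i a b ha hb => h (i+1) a b (by simpa using ha) (by simpa using hb))
    simp [List.mapM_cons, h1, h2]

theorem O_hat {t : STerm F V} : ∀ {u : Term F V}, O R ar mOf u t →
    ∃ v, hatT ar t = some v ∧ RedStar R u v := by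
  induction t using tind with
  | hv x => intro u h; cases h with
    | var h => exact ⟨_, by rw [hatT], h⟩
  | ha f ts ih =>
    intro u h
    cases h with
    | guard h =>
      obtain ⟨v, h1, h2⟩ := ih _ (by simp) h
      exact ⟨v, by rw [hatT]; exact h1, h2⟩
    | @orig _ f us args h1 h2 h3 h4 h5 =>
      have key : ∀ i : Fin (ar f), ∃ v, hatT ar (ts[i.1]'(by omega)) = some v ∧
          RedStar R (us[i.1]'(by omega)) v := by
        intro i
        exact ih _ (List.getElem_mem _) (h4 i.1 _ _ (List.getElem?_eq_getElem _)
          (List.getElem?_eq_getElem _))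
      choose v hv1 hv2 using key
      refine ⟨.app f (List.ofFn v), ?_, h3.trans ?_⟩
      · rw [hat_orig, mapM_some (hatT ar) _ (List.ofFn v)]
        · rfl
        · simp; omega
        · intro i a b ha hb
          obtain ⟨hi, hb⟩ := List.getElem?_eq_some_iff.1 hb
          obtain ⟨hi', ha⟩ := List.getElem?_eq_some_iff.1 ha
          simp at hi hb ha
          subst ha hb
          exact hv1 ⟨i, hi⟩
      · apply red_args
        · simp [h1]
        · intro i a b ha hb
          obtain ⟨hi, hb⟩ := List.getElem?_eq_some_iff.1 hb
          obtain ⟨hi', ha⟩ := List.getElem?_eq_some_iff.1 ha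
          simp at hi hb
          subst ha hb
          exact hv2 ⟨i, hi⟩

end

/-- `t` is an instance of `ext(w)` -/
inductive Mt (mOf : F → ℕ) (τ : V → STerm F V) : Term F V → STerm F V → Prop where
  | var (x : V) : Mt mOf τ (.var x) (τ x)
  | app {f : F} {ws : List (Term F V)} {args : List (STerm F V)} :
      args.length = ws.length + mOf f →
      (∀ (i : ℕ) w t, ws[i]? = some w → args[i]? = some t → Mt mOf τ w t) →
      Mt mOf τ (.app f ws) (.app (.orig f) args)

theorem extL_aux (mOf : F → ℕ) (σ : WVar V → STerm F V) (ws : List (Term F V))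
    (h : ∀ w ∈ ws, ∀ c, Mt mOf (fun x => σ (Sum.inl x)) w ((extT mOf w c).1.subst σ)) : ∀ c,
    (extTList mOf ws c).1.length = ws.length ∧ ∀ (i : ℕ) w t, ws[i]? = some w →
      (extTList mOf ws c).1[i]? = some t → Mt mOf (fun x => σ (Sum.inl x)) w (t.subst σ) := by
  induction ws with
  | nil => intro c; simp [extTList]
  | cons w ws ih =>
    intro c
    have ih' := ih (fun w hw => h w (by simp [hw])) (extT mOf w c).2
    rw [extTList]
    refine ⟨by simpa using ih'.1, ?_⟩
    intro i w' t hw ht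
    cases i with
    | zero =>
      simp at hw ht
      subst hw ht
      exact h _ (by simp) c
    | succ i => exact ih'.2 i w' t (by simpa using hw) (by simpa using ht)

theorem ext_Mt (mOf : F → ℕ) (σ : WVar V → STerm F V) (w : Term F V) : ∀ c,
    Mt mOf (fun x => σ (Sum.inl x)) w ((extT mOf w c).1.subst σ) := by
  induction w using tind with
  | hv x => intro c; rw [extT, subst_var]; exact .var (τ := fun x => σ (Sum.inl x)) x
  | ha f ws ih =>
    intro c
    have h := extL_aux mOf σ ws ih c
    rw [extT, subst_app]
    refine .app (by simp [h.1]) ?_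
    intro i w t hw ht
    have hi := (List.getElem?_eq_some_iff.1 hw).1
    rw [List.map_append, List.getElem?_append_left (by simp [h.1, hi]), List.getElem?_map,
      Option.map_eq_some_iff] at ht
    obtain ⟨t', ht', rfl⟩ := ht
    exact h.2 i w t' hw ht'

theorem extL_Mt (mOf : F → ℕ) (σ : WVar V → STerm F V) (ws : List (Term F V)) (c : ℕ) :
    (extTList mOf ws c).1.length = ws.length ∧ ∀ (i : ℕ) w t, ws[i]? = some w →
      (extTList mOf ws c).1[i]? = some t → Mt mOf (fun x => σ (Sum.inl x)) w (t.subst σ) :=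
  extL_aux mOf σ ws (fun w _ => ext_Mt mOf σ w) c

section
variable [DecidableEq V] {R : CTRS F V} {ar mOf : F → ℕ} {idx : CRule F V → ℕ}

theorem inPat_Mt {τ : V → STerm F V} {w : Term F V} {t : STerm F V} {x b}
    (h : InPat ar w t x b) : Mt mOf τ w t → b = τ x := by
  induction h with
  | var x t => intro h; cases h; rfl
  | app h1 h2 h3 _ ih =>
    intro h
    cases h with
    | app h4 h5 => exact ih (h5 _ _ _ h2 h3)

theorem Mt_inPat {τ : V → STerm F V} {w : Term F V} : ∀ {t : STerm F V} {x : V},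
    w.WF ar → Mt mOf τ w t → x ∈ w.varList → InPat ar w t x (τ x) := by
  induction w using tind with
  | hv y =>
    intro t x _ h hx
    simp [Term.varList] at hx
    subst hx
    cases h
    exact .var _ _
  | ha f ws ih =>
    intro t x hw h hx
    rw [varList_app, List.mem_flatMap] at hx
    obtain ⟨w, hwm, hx⟩ := hx
    obtain ⟨i, hi, rfl⟩ := List.getElem_of_mem hwm
    cases hw with
    | app _ _ hl hwf =>
    cases h with
    | app h4 h5 =>
    exact .app (by omega) (List.getElem?_eq_getElem hi) (List.getElem?_eq_getElem (by omega))
      (ih _ hwm (hwf _ hwm) (h5 _ _ _ (List.getElem?_eq_getElem hi)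
        (List.getElem?_eq_getElem (by omega))) hx)

theorem sum_unique {α : Type} (g : α → ℕ) : ∀ (l : List α) (i j : ℕ) (a b : α), l[i]? = some a →
    l[j]? = some b → 0 < g a → 0 < g b → (l.map g).sum ≤ 1 → i = j
  | [], _, _, _, _, h, _, _, _, _ => by simp at h
  | c :: l, 0, 0, _, _, _, _, _, _, _ => rfl
  | c :: l, 0, j+1, a, b, h1, h2, h3, h4, h5 => by
    simp at h1 h2 h5
    subst h1
    have := List.le_sum_of_mem (List.mem_map_of_mem (f := g) (List.mem_of_getElem? h2))
    omega
  | c :: l, i+1, 0, a, b, h1, h2, h3, h4, h5 => by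
    simp at h1 h2 h5
    subst h2
    have := List.le_sum_of_mem (List.mem_map_of_mem (f := g) (List.mem_of_getElem? h1))
    omega
  | c :: l, i+1, j+1, a, b, h1, h2, h3, h4, h5 => by
    simp at h1 h2 h5
    rw [sum_unique g l i j a b h1 h2 h3 h4 (by omega)]

theorem matching {τ : V → STerm F V} (B : V → Prop) {w : Term F V} :
    ∀ {u : Term F V} {t : STerm F V}, w.WF ar → Mt mOf τ w t → O R ar mOf u t →
    (∀ x, B x → w.count x ≤ 1) →
    ∃ σ : V → Term F V, RedStar R u (w.subst σ) ∧
      (∀ x ∈ w.varList, B x → O R ar mOf (σ x) (τ x)) ∧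
      (∀ x, ¬ B x → σ x = (hatT ar (τ x)).getD (.var x)) := by
  classical
  induction w using tind with
  | hv y =>
    intro u t _ h ho _
    cases h
    by_cases hB : B y
    · refine ⟨fun x => if x = y then u else (hatT ar (τ x)).getD (.var x), ?_, ?_, ?_⟩
      · rw [subst_var]; simp; exact .refl
      · intro x hx _
        simp [Term.varList] at hx
        subst hx
        simpa using ho
      · intro x hx
        have : x ≠ y := by rintro rfl; exact hx hB
        simp [this]
    · refine ⟨fun x => (hatT ar (τ x)).getD (.var x), ?_, ?_, ?_⟩
      · rw [subst_var]
        obtain ⟨v, h1, h2⟩ := O_hat ho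
        simpa [h1] using h2
      · intro x hx hb
        simp [Term.varList] at hx
        subst hx
        exact absurd hb hB
      · intro x hx; rfl
  | ha f ws ih =>
    intro u t hw h ho hc
    cases hw with
    | app _ _ hl hwf =>
    cases h with
    | @app _ _ args h4 h5 =>
    cases ho with
    | @orig _ _ us _ g1 g2 g3 g4 g5 =>
    have key : ∀ i : Fin ws.length, _ := fun i =>
      @ih ws[i.1] (List.getElem_mem _) (us[i.1]'(by omega)) (args[i.1]'(by omega))
        (hwf _ (List.getElem_mem _))
        (h5 i.1 _ _ (List.getElem?_eq_getElem _) (List.getElem?_eq_getElem _))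
        (g4 i.1 _ _ (List.getElem?_eq_getElem _) (List.getElem?_eq_getElem _))
        (fun x hx => by
          refine le_trans ?_ (hc x hx)
          rw [count_app]
          exact List.le_sum_of_mem (List.mem_map_of_mem (List.getElem_mem _)))
    choose s hs1 hs2 hs3 using key
    let σ : V → Term F V := fun x =>
      if hx : ∃ i : Fin ws.length, x ∈ (ws[i.1]).varList then s hx.choose x
      else (hatT ar (τ x)).getD (.var x)
    have hσ : ∀ (i : Fin ws.length), ∀ x ∈ (ws[i.1]).varList, σ x = s i x := by
      intro i x hx
      have hex : ∃ i : Fin ws.length, x ∈ (ws[i.1]).varList := ⟨i, hx⟩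
      have h1 : σ x = s hex.choose x := by simp only [σ]; rw [dif_pos hex]
      rw [h1]
      by_cases hB : B x
      · have : hex.choose = i := by
          apply Fin.ext
          refine sum_unique (Term.count x) ws _ _ _ _ (List.getElem?_eq_getElem hex.choose.2)
            (List.getElem?_eq_getElem i.2) (count_pos.2 hex.choose_spec) (count_pos.2 hx) ?_
          rw [← count_app x f]; exact hc x hB
        rw [this]
      · rw [hs3 _ _ hB, hs3 _ _ hB]
    refine ⟨σ, ?_, ?_, ?_⟩
    · refine g3.trans ?_
      rw [subst_app]
      apply red_args
      · simp; omega
      · intro i a b ha hb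
        obtain ⟨hi, hb⟩ := List.getElem?_eq_some_iff.1 hb
        obtain ⟨hi', ha⟩ := List.getElem?_eq_some_iff.1 ha
        simp at hi hb
        subst ha hb
        rw [subst_congr (hσ ⟨i, hi⟩)]
        exact hs1 ⟨i, hi⟩
    · intro x hx hB
      rw [varList_app, List.mem_flatMap] at hx
      obtain ⟨w, hwm, hx⟩ := hx
      obtain ⟨i, hi, rfl⟩ := List.getElem_of_mem hwm
      rw [hσ ⟨i, hi⟩ x hx]
      exact hs2 ⟨i, hi⟩ x hx hB
    · intro x hB
      by_cases hx : ∃ i : Fin ws.length, x ∈ (ws[i.1]).varList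
      · rw [hσ hx.choose x hx.choose_spec, hs3 _ _ hB]
      · simp only [σ]; rw [dif_neg hx]

theorem bar_app (mOf : F → ℕ) (f : F) (ts : List (Term F V)) :
    barT mOf (.app f ts) = .app (.orig f) (ts.map (barT mOf) ++ List.replicate (mOf f) botT) := by
  rw [barT]; simp

theorem slot_bot_of_replicate {u : Term F V} {t e : STerm F V} {n : ℕ}
    (h : e ∈ List.replicate n (botT : STerm F V)) : Slot R ar mOf u t e := by
  rw [List.eq_of_mem_replicate h]; exact .bot

theorem O_bar {σ : V → Term F V} {τ : WVar V → STerm F V} {s : Term F V} : s.WF ar →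
    (∀ x ∈ s.varList, O R ar mOf (σ x) (τ (Sum.inl x))) →
    O R ar mOf (s.subst σ) ((barT mOf s).subst τ) := by
  induction s using tind with
  | hv y =>
    intro _ h
    rw [subst_var, barT, subst_var]
    exact h y (by simp [Term.varList])
  | ha f ts ih =>
    intro hw h
    cases hw with
    | app _ _ hl hwf =>
    have hb : (botT : STerm F V).subst τ = botT := by rw [botT, subst_app]; simp
    rw [subst_app, bar_app, subst_app]
    simp only [List.map_append, List.map_replicate, hb, List.map_map]
    refine .orig (us := ts.map (Term.subst σ)) (by simpa using hl) (by simp [hl]) .refl ?_ ?_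
    · intro i a b ha hb
      have hi : i < ts.length := by simpa using (List.getElem?_eq_some_iff.1 ha).1
      rw [List.getElem?_append_left (by simpa using hi)] at hb
      rw [List.getElem?_map, List.getElem?_eq_getElem hi] at ha hb
      simp at ha hb
      subst ha hb
      refine ih _ (List.getElem_mem _) (hwf _ (List.getElem_mem _)) (fun x hx => h x ?_)
      rw [varList_app]; exact List.mem_flatMap.2 ⟨_, List.getElem_mem _, hx⟩
    · intro q e hq he
      rw [List.getElem?_append_right (by simpa [hl] using hq)] at he
      exact slot_bot_of_replicate (List.mem_of_getElem? he)

/-- classification of root steps -/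
inductive RI (R : CTRS F V) (ar mOf : F → ℕ) : STerm F V → STerm F V → Prop where
  | uncond {ρ : CRule F V} {σ : WVar V → STerm F V} {f : F} {args : List (STerm F V)} :
      ρ ∈ R → ρ.conds = [] → Mt mOf (fun x => σ (Sum.inl x)) ρ.lhs (.app (.orig f) args) →
      RI R ar mOf (.app (.orig f) args) (guardT ((barT mOf ρ.rhs).subst σ))
  | start {ρ : CRule F V} {σ : WVar V → STerm F V} {f : F} {args : List (STerm F V)}
      {n : ℕ} {c : Term F V × Term F V} :
      ρ ∈ R → Mt mOf (fun x => σ (Sum.inl x)) ρ.lhs (.app (.orig f) args) → ar f ≤ n →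
      ρ.conds[0]? = some c →
      RI R ar mOf (.app (.orig f) args)
        (.app (.orig f) (args.set n (.app (.tup ρ 1) [guardT ((barT mOf c.1).subst σ)])))
  | mid {ρ : CRule F V} {σ : WVar V → STerm F V} {f : F} {args : List (STerm F V)}
      {n j : ℕ} {c d : Term F V × Term F V} {E : STerm F V} :
      ρ ∈ R → Mt mOf (fun x => σ (Sum.inl x)) ρ.lhs (.app (.orig f) args) → ar f ≤ n →
      ρ.conds[j]? = some c → ρ.conds[j+1]? = some d → Mt mOf (fun x => σ (Sum.inl x)) c.2 E →
      args[n]? = some (.app (.tup ρ (j+1))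
        (guardT E :: (Vlist ρ (j+1)).map (fun v => σ (Sum.inl v)))) →
      RI R ar mOf (.app (.orig f) args)
        (.app (.orig f) (args.set n (.app (.tup ρ (j+2)) (guardT ((barT mOf d.1).subst σ) ::
          (Vlist ρ (j+2)).map (fun v => σ (Sum.inl v))))))
  | fin {ρ : CRule F V} {σ : WVar V → STerm F V} {f : F} {args : List (STerm F V)}
      {n j : ℕ} {c : Term F V × Term F V} {E : STerm F V} :
      ρ ∈ R → Mt mOf (fun x => σ (Sum.inl x)) ρ.lhs (.app (.orig f) args) → ar f ≤ n →
      ρ.conds[j]? = some c → ρ.conds.length = j + 1 → Mt mOf (fun x => σ (Sum.inl x)) c.2 E →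
      args[n]? = some (.app (.tup ρ (j+1))
        (guardT E :: (Vlist ρ (j+1)).map (fun v => σ (Sum.inl v)))) →
      RI R ar mOf (.app (.orig f) args) (guardT ((barT mOf ρ.rhs).subst σ))
  | guard {a : STerm F V} : RI R ar mOf (guardT (guardT a)) (guardT a)
  | shift {f : F} {args : List (STerm F V)} {i : ℕ} {a : STerm F V} :
      i < ar f → args[i]? = some (guardT a) →
      RI R ar mOf (.app (.orig f) args)
        (guardT (.app (.orig f) ((args.take (ar f)).set i a ++ List.replicate (mOf f) botT)))

theorem guard_subst (σ : WVar V → STerm F V) (a : STerm F V) :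
    (guardT a).subst σ = guardT (a.subst σ) := by
  rw [guardT, subst_app]; rfl

theorem bot_subst (σ : WVar V → STerm F V) :
    (botT : STerm F V).subst σ = botT := by
  rw [botT, subst_app]; rfl

theorem tup_subst (σ : WVar V → STerm F V) (ρ : CRule F V) (j : ℕ) (a : STerm F V) :
    (tupT ρ j a).subst σ = .app (.tup ρ j) (guardT (a.subst σ) ::
      (Vlist ρ j).map (fun v => σ (Sum.inl v))) := by
  rw [tupT, subst_app, List.map_cons, guard_subst, List.map_map]
  congr 3
  funext v
  simp [subst_var]

theorem slot_set (A : List (STerm F V)) (m i c0 : ℕ) (a b : STerm F V) (σ : WVar V → STerm F V) :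
    (A ++ (List.range m).map (fun q => if q = i then a else .var (Sum.inr (c0 + q)))).map
      (Term.subst σ) =
    ((A ++ (List.range m).map (fun q => if q = i then b else .var (Sum.inr (c0 + q)))).map
      (Term.subst σ)).set (A.length + i) (a.subst σ) := by
  apply List.ext_getElem
  · simp
  · intro n h1 h2
    simp only [List.length_map, List.length_append, List.length_range] at h1
    simp only [List.getElem_map, List.getElem_set, List.getElem_append, List.getElem_range]
    by_cases hn : n < A.length
    · have : A.length + i ≠ n := by omega
      simp [hn, this]
    · by_cases hi : A.length + i = n
      · have : n - A.length = i := by omega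
        simp [hn, hi, this]
      · have : n - A.length ≠ i := by omega
        simp [hn, hi, this]

theorem root_RI (hS : GoodSetup R ar mOf idx) {prev} {t t' : STerm F V}
    (h : RootStep (SRSys R ar mOf idx) prev t t') : RI R ar mOf t t' := by
  obtain ⟨hwf, hlhs, hidx, -, -⟩ := hS
  obtain ⟨r, hr, σ, rfl, rfl, -⟩ := h
  rcases hr with ⟨ρ, hρ, hc, rfl⟩ | ⟨ρ, hρ, hc, j, hj, rfl⟩ | rfl | ⟨f, i, hi, rfl⟩
  · obtain ⟨f, ws, hl⟩ := hlhs ρ hρ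
    have hm := ext_Mt mOf σ ρ.lhs 0
    simp only [uncondSRRule, guard_subst]
    rw [hl, extT, subst_app] at hm ⊢
    refine .uncond hρ hc ?_
    rw [hl]; exact hm
  · obtain ⟨f, ws, hl⟩ := hlhs ρ hρ
    have hw := (hwf ρ hρ).1
    rw [hl] at hw
    cases hw with
    | app _ _ hlen _ =>
    obtain ⟨hi1, hi2⟩ := hidx ρ hρ hc f ws hl
    have hA := extL_Mt mOf σ ws 0
    obtain ⟨hAl, hAm⟩ := hA
    have hMt : ∀ mid : STerm F V, Mt mOf (fun x => σ (Sum.inl x)) ρ.lhs (.app (.orig f)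
        (((extTList mOf ws 0).1 ++ (List.range (mOf f)).map (fun q => if q = idx ρ - 1 then mid
          else .var (Sum.inr ((extTList mOf ws 0).2 + q)))).map (Term.subst σ))) := by
      intro mid
      rw [hl]
      refine .app (by simp [hAl]) ?_
      intro i w t hw ht
      have hi := (List.getElem?_eq_some_iff.1 hw).1
      rw [List.map_append, List.getElem?_append_left (by simp [hAl, hi]), List.getElem?_map,
        Option.map_eq_some_iff] at ht
      obtain ⟨t', ht', rfl⟩ := ht
      exact hAm i w t' hw ht'
    have hget : ∀ mid : STerm F V, (((extTList mOf ws 0).1 ++ (List.range (mOf f)).map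
        (fun q => if q = idx ρ - 1 then mid
          else .var (Sum.inr ((extTList mOf ws 0).2 + q)))).map (Term.subst σ))[(extTList mOf ws 0).1.length
            + (idx ρ - 1)]? = some (mid.subst σ) := by
      intro mid
      rw [List.map_append, List.getElem?_append_right (by simp)]
      have : idx ρ - 1 < mOf f := by omega
      simp [this]
    have hk : 0 < ρ.conds.length := List.length_pos_iff.2 hc
    simp only [condSRRule, hl]
    rcases j with _ | j
    · have h0 : (0 : ℕ) ≠ ρ.conds.length := by omega
      simp only [if_true, if_neg h0, subst_app]
      rw [slot_set _ _ _ _ (tupT _ _ _) botT, tup_subst]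
      have hv : Vlist ρ 1 = [] := by simp [Vlist]
      have hg : ρ.conds[0]? = some (ρ.conds.getD 0 (dummyCond ρ)) := by
        simp [List.getD_eq_getElem?_getD, List.getElem?_eq_getElem hk]
      have := RI.start (ar := ar) (n := (extTList mOf ws 0).1.length + (idx ρ - 1)) hρ (hMt botT)
        (by omega) hg
      simpa [hv] using this
    · simp only [Nat.add_eq_zero_iff, one_ne_zero, and_false, if_false, Nat.add_sub_cancel]
      have hg : ρ.conds[j]? = some (ρ.conds.getD j (dummyCond ρ)) := by
        simp [List.getD_eq_getElem?_getD, List.getElem?_eq_getElem (show j < ρ.conds.length by omega)]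
      have hE := ext_Mt mOf σ (ρ.conds.getD j (dummyCond ρ)).2 ((extTList mOf ws 0).2 + mOf f)
      by_cases hjk : j + 1 = ρ.conds.length
      · rw [if_pos hjk, guard_subst, subst_app]
        refine .fin (n := (extTList mOf ws 0).1.length + (idx ρ - 1)) hρ (hMt _)
          (by omega) hg hjk.symm hE ?_
        rw [hget, tup_subst]
      · rw [if_neg hjk, subst_app, subst_app]
        have hg' : ρ.conds[j+1]? = some (ρ.conds.getD (j+1) (dummyCond ρ)) := by
          simp [List.getD_eq_getElem?_getD, List.getElem?_eq_getElem (show j+1 < ρ.conds.length by omega)]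
        rw [slot_set _ _ _ _ (tupT ρ (j+1+1) _) (tupT ρ (j+1) _), tup_subst]
        refine .mid (n := (extTList mOf ws 0).1.length + (idx ρ - 1)) hρ (hMt _)
          (by omega) hg hg' hE ?_
        rw [hget, tup_subst]
  · simp only [auxGuard, guard_subst]
    exact .guard
  · simp only [auxShift, guard_subst, subst_app]
    have h1 : ∀ L : List (STerm F V), (∀ (k : ℕ), k < ar f → L[k]? = some (if k = i then guardT (σ (Sum.inr k)) else σ (Sum.inr k))) →
      ((List.range (ar f)).map (fun q => (Term.var (Sum.inr q) : STerm F V)) ++ List.replicate (mOf f) botT).map (Term.subst σ)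
       = (L.take (ar f)).set i (σ (Sum.inr i)) ++ List.replicate (mOf f) botT := by
      intro L hL
      rw [List.map_append, List.map_replicate, bot_subst]
      congr 1
      apply List.ext_getElem?
      intro k
      by_cases hk : k < ar f
      · have := (List.getElem?_eq_some_iff.1 (hL k hk)).1
        rw [List.getElem?_set, List.getElem?_take_of_lt hk, hL k hk]
        by_cases hki : i = k
        · subst hki; simp [hk, subst_var, this]
        · have : k ≠ i := fun h => hki h.symm
          simp [hki, this, hk, subst_var]
      · have : i ≠ k := by omega
        rw [List.getElem?_set, if_neg this]
        rw [List.getElem?_eq_none (by simpa using hk), List.getElem?_eq_none]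
        simp; omega
    have h2 : ∀ k, k < ar f → (((List.range (ar f)).map
         (fun q => if q = i then guardT (Term.var (Sum.inr q)) else (Term.var (Sum.inr q) : STerm F V)) ++
      (List.range (mOf f)).map (fun q => Term.var (Sum.inr (ar f + q)))).map (Term.subst σ))[k]? =
        some (if k = i then guardT (σ (Sum.inr k)) else σ (Sum.inr k)) := by
      intro k hk
      rw [List.map_append, List.getElem?_append_left (by simpa using hk)]
      simp only [List.getElem?_map, List.getElem?_range hk, Option.map_some, Option.some.injEq]
      split_ifs
      · rw [guard_subst, subst_var]
      · rw [subst_var]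
    rw [h1 _ h2]
    refine .shift hi ?_
    rw [h2 i hi, if_pos rfl]

end

section
variable [DecidableEq V] {R : CTRS F V} {ar mOf : F → ℕ} {idx : CRule F V → ℕ}

/-- `x ∈ Var(l, t1, …, tj)` -/
def Early (ρ : CRule F V) (j : ℕ) (x : V) : Prop :=
  x ∈ ρ.lhs.varList ∨ ∃ i < j, ∃ c, ρ.conds[i]? = some c ∧ x ∈ c.2.varList

theorem mem_take_vars (cs : List (Term F V × Term F V)) (j : ℕ) (x : V) :
    x ∈ ((cs.take j).map Prod.snd).flatMap Term.varList ↔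
      ∃ i < j, ∃ c, cs[i]? = some c ∧ x ∈ c.2.varList := by
  simp only [List.mem_flatMap, List.mem_map]
  constructor
  · rintro ⟨t, ⟨c, hc, rfl⟩, hx⟩
    obtain ⟨i, hi⟩ := List.mem_iff_getElem?.1 hc
    have hl := (List.getElem?_eq_some_iff.1 hi).1
    simp at hl
    rw [List.getElem?_take_of_lt hl.1] at hi
    exact ⟨i, hl.1, c, hi, hx⟩
  · rintro ⟨i, hi, c, hc, hx⟩
    refine ⟨c.2, ⟨c, ?_, rfl⟩, hx⟩
    rw [← List.getElem?_take_of_lt hi] at hc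
    exact List.mem_of_getElem? hc

theorem mem_Vlist {ρ : CRule F V} {j : ℕ} {x : V} : x ∈ Vlist ρ (j+1) ↔
    ∃ i < j, ∃ c, ρ.conds[i]? = some c ∧ x ∈ c.2.varList := by
  simp only [Vlist, List.mem_dedup, Nat.add_sub_cancel]
  exact mem_take_vars _ _ _

theorem mem_Xlist {ρ : CRule F V} {j : ℕ} {x : V} : x ∈ Xlist ρ (j+1) ↔ Early ρ j x := by
  simp only [Xlist, List.mem_dedup, Nat.add_sub_cancel, List.mem_append]
  rw [mem_take_vars]; rfl

theorem Early.mono {ρ : CRule F V} {i j : ℕ} {x : V} (h : Early ρ i x) (hij : i ≤ j) :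
    Early ρ j x := by
  rcases h with h | ⟨k, hk, h⟩
  · exact .inl h
  · exact .inr ⟨k, by omega, h⟩

theorem Early_succ {ρ : CRule F V} {j : ℕ} {x : V} {c} (hc : ρ.conds[j]? = some c)
    (h : Early ρ (j+1) x) : Early ρ j x ∨ x ∈ c.2.varList := by
  rcases h with h | ⟨k, hk, c', hc', h⟩
  · exact .inl (.inl h)
  · rcases Nat.lt_succ_iff_lt_or_eq.1 hk with hk | rfl
    · exact .inl (.inr ⟨k, hk, c', hc', h⟩)
    · rw [hc] at hc'; cases hc'; exact .inr h

theorem seqCount_pos {x : V} {ts : List (Term F V)} :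
    0 < seqCount x ts ↔ ∃ t ∈ ts, x ∈ t.varList := by
  rw [seqCount_eq, List.count_pos_iff, List.mem_flatMap]

theorem det_early (hD : IsDCTRS R) {ρ : CRule F V} (hρ : ρ ∈ R) {i : ℕ} {c} {x : V}
    (hc : ρ.conds[i]? = some c) (hx : x ∈ c.1.varList) : Early ρ i x := by
  obtain ⟨hi, rfl⟩ := List.getElem?_eq_some_iff.1 hc
  have := (hD ρ hρ).1 i hi x (count_pos.2 hx)
  rw [seqCount_eq, List.count_pos_iff, List.flatMap_cons, List.mem_append, mem_take_vars] at this
  exact this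

theorem rhs_early (hD : IsDCTRS R) {ρ : CRule F V} (hρ : ρ ∈ R) {x : V}
    (hx : x ∈ ρ.rhs.varList) : Early ρ ρ.conds.length x := by
  have := (hD ρ hρ).2.1 x (count_pos.2 hx)
  rw [seqCount_pos] at this
  obtain ⟨t, ht, hx⟩ := this
  rcases List.mem_cons.1 ht with rfl | ht
  · exact .inl hx
  · obtain ⟨c, hc, ht⟩ := List.mem_flatMap.1 ht
    obtain ⟨i, hi⟩ := List.mem_iff_getElem?.1 hc
    have hl := (List.getElem?_eq_some_iff.1 hi).1
    simp at ht
    rcases ht with rfl | rfl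
    · exact (det_early hD hρ hi hx).mono hl.le
    · exact .inr ⟨i, hl, c, hi, hx⟩

theorem map_var_count (G : Type) (x : V) (X : List V) :
    ((X.map (Term.var : V → Term G V)).map (Term.count x)).sum = X.count x := by
  induction X with
  | nil => simp
  | cons y X ih =>
    simp only [List.map_cons, List.sum_cons, ih, List.count_cons, Term.count]
    by_cases h : y = x <;> simp [h, add_comm]

theorem count_uterm (ρ : CRule F V) (j : ℕ) (t : Term F V) (x : V) :
    (uterm ρ j t).count x = t.count x + (if x ∈ Xlist ρ j then 1 else 0) := by
  rw [uterm, count_app, List.map_cons, List.sum_cons, liftF, count_mapF, map_var_count]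
  congr 1
  exact List.Nodup.count (List.nodup_dedup _)

theorem uwll (hU : IsUWLL R) {ρ : CRule F V} (hρ : ρ ∈ R) {j : ℕ} (hj : j ≤ ρ.conds.length)
    {x : V} (hx : 0 < (urhs ρ j).count x) : (ulhs ρ j).count x = 1 := by
  have h1 : (⟨ulhs ρ j, urhs ρ j, []⟩ : CRule (UF F V) V) ∈ USys R := by
    refine Set.mem_iUnion₂.2 ⟨ρ, hρ, j, hj, rfl⟩
  have := hU _ h1 x (by simpa [seqCount, CRule.srcs] using hx)
  simpa [seqCount, CRule.pats] using this

theorem lin_lhs (hU : IsUWLL R) {ρ : CRule F V} (hρ : ρ ∈ R) (hc : 0 < ρ.conds.length) {x : V} :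
    ρ.lhs.count x ≤ 1 := by
  by_cases hx : x ∈ ρ.lhs.varList
  · have := uwll hU hρ (j := 0) (by omega) (x := x) (by
      have h0 : (0 : ℕ) ≠ ρ.conds.length := by omega
      rw [urhs, if_neg h0, count_uterm, if_pos (mem_Xlist.2 (.inl hx))]
      omega)
    rw [ulhs, if_pos rfl, liftF, count_mapF] at this
    omega
  · have := mt count_pos.1 hx
    omega

theorem getD_of {ρ : CRule F V} {j : ℕ} {c} (hc : ρ.conds[j]? = some c) :
    ρ.conds.getD j (dummyCond ρ) = c := by
  simp [List.getD_eq_getElem?_getD, hc]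

theorem lin_mid (hU : IsUWLL R) {ρ : CRule F V} (hρ : ρ ∈ R) {j : ℕ} (hj : j + 1 < ρ.conds.length)
    {c} (hc : ρ.conds[j]? = some c) {x : V} (hx : x ∈ c.2.varList) :
    c.2.count x ≤ 1 ∧ ¬ Early ρ j x := by
  have := uwll hU hρ (j := j+1) (by omega) (x := x) (by
      rw [urhs, if_neg (by omega), count_uterm, if_pos (mem_Xlist.2 (.inr ⟨j, by omega, c, hc, hx⟩))]
      omega)
  rw [ulhs, if_neg (by omega), Nat.add_sub_cancel, getD_of hc, count_uterm] at this
  have h2 := count_pos.2 hx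
  rw [← mem_Xlist]
  refine ⟨by omega, fun h => ?_⟩
  rw [if_pos h] at this
  omega

theorem lin_fin (hU : IsUWLL R) {ρ : CRule F V} (hρ : ρ ∈ R) {j : ℕ} (hj : ρ.conds.length = j + 1)
    {c} (hc : ρ.conds[j]? = some c) {x : V} (hx : x ∈ ρ.rhs.varList) :
    c.2.count x ≤ 1 ∧ (x ∈ c.2.varList → ¬ Early ρ j x) := by
  have := uwll hU hρ (j := j+1) (by omega) (x := x) (by
      rw [urhs, if_pos hj.symm, liftF, count_mapF]
      exact count_pos.2 hx)
  rw [ulhs, if_neg (by omega), Nat.add_sub_cancel, getD_of hc, count_uterm] at this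
  rw [← mem_Xlist]
  refine ⟨by omega, fun hx h => ?_⟩
  have h2 := count_pos.2 hx
  rw [if_pos h] at this
  omega

theorem wll_src (hD : IsDCTRS R) (hW : IsWLL R) {ρ : CRule F V} (hρ : ρ ∈ R) {i j : ℕ}
    (hij : i ≤ j) {c d} (hc : ρ.conds[i]? = some c) (hd : ρ.conds[j]? = some d) {x : V}
    (hx : x ∈ c.1.varList) : x ∉ d.2.varList := by
  intro hx2
  have h1 := hW ρ hρ x (seqCount_pos.2 ⟨c.1, by
    simp only [CRule.srcs, List.mem_cons, List.mem_map]
    exact .inr ⟨c, List.mem_of_getElem? hc, rfl⟩, hx⟩)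
  have hd' : ρ.pats[j+1]? = some d.2 := by simp [CRule.pats, hd]
  rcases det_early hD hρ hc hx with h | ⟨k, hk, c', hc', h⟩
  · have := sum_unique (Term.count x) ρ.pats 0 (j+1) ρ.lhs d.2 (by simp [CRule.pats]) hd'
      (count_pos.2 h) (count_pos.2 hx2) h1.le
    omega
  · have := sum_unique (Term.count x) ρ.pats (k+1) (j+1) c'.2 d.2 (by simp [CRule.pats, hc']) hd'
      (count_pos.2 h) (count_pos.2 hx2) h1.le
    omega

abbrev SS (R : CTRS F V) (ar mOf : F → ℕ) : STerm F V → STerm F V → Prop := CtxStep (RI R ar mOf)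

theorem ctx_inv {G W : Type} {r : Term G W → Term G W → Prop} {t t' : Term G W} (h : CtxStep r t t') :
    r t t' ∨ ∃ g args n s s', t = .app g args ∧ args[n]? = some s ∧ CtxStep r s s' ∧
      t' = .app g (args.set n s') := by
  cases h with
  | root h => exact .inl h
  | @congr g pre post s s' h =>
    refine .inr ⟨g, _, pre.length, s, s', rfl, by simp, h, ?_⟩
    simp

theorem pat_step {w : Term F V} {s s' : STerm F V} {x : V} {b : STerm F V}
    (h : InPat ar w s' x b) : SS R ar mOf s s' →
    ∃ a, InPat ar w s x a ∧ (a = b ∨ SS R ar mOf a b) := by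
  induction h generalizing s with
  | var x t => intro h; exact ⟨s, .var _ _, .inr h⟩
  | @app f ws ts i w t t' x h1 h2 h3 h4 ih =>
    intro h
    have key : ∀ args n e, ar f ≤ n → ts = args.set n e →
        ∃ a, InPat ar (.app f ws) (.app (.orig f) args) x a ∧ (a = t' ∨ SS R ar mOf a t') := by
      intro args n e hn hts
      refine ⟨t', .app h1 h2 (t := t) ?_ h4, .inl rfl⟩
      rw [hts, List.getElem?_set, if_neg (by omega)] at h3
      exact h3
    rcases ctx_inv h with h | ⟨g, args, n, a, a', rfl, ha, hs, he⟩
    · generalize he : Term.app (SSym.orig f) ts = s' at h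
      cases h <;> simp only [guardT, Term.app.injEq, SSym.orig.injEq, reduceCtorEq, false_and] at he
      · obtain ⟨rfl, rfl⟩ := he
        exact key _ _ _ (by assumption) rfl
      · obtain ⟨rfl, rfl⟩ := he
        exact key _ _ _ (by assumption) rfl
    · simp only [Term.app.injEq] at he
      obtain ⟨rfl, rfl⟩ := he
      by_cases hn : n = i
      · subst hn
        have hl := (List.getElem?_eq_some_iff.1 ha).1
        simp [List.getElem?_set, hl] at h3
        subst h3
        obtain ⟨b, hb1, hb2⟩ := ih hs
        exact ⟨b, .app h1 h2 ha hb1, hb2⟩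
      · rw [List.getElem?_set, if_neg hn] at h3
        exact ⟨t', .app h1 h2 h3 h4, .inl rfl⟩

theorem Slot_inv {u : Term F V} {t : STerm F V} {ρ : CRule F V} {k : ℕ}
    {L : List (STerm F V)} (h : Slot R ar mOf u t (.app (.tup ρ k) L)) :
    ∃ j σ e0 vs, k = j + 1 ∧ L = e0 :: vs ∧ ρ ∈ R ∧ j < ρ.conds.length ∧
      RedStar R u (ρ.lhs.subst σ) ∧
      (∀ i < j, ∀ c, ρ.conds[i]? = some c → RedStar R (c.1.subst σ) (c.2.subst σ)) ∧
      (∀ c, ρ.conds[j]? = some c → O R ar mOf (c.1.subst σ) e0) ∧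
      (∀ (i : ℕ) v e, (Vlist ρ (j+1))[i]? = some v → vs[i]? = some e → O R ar mOf (σ v) e) ∧
      (∀ x b, InPat ar ρ.lhs t x b → O R ar mOf (σ x) b) := by
  generalize he : Term.app (SSym.tup ρ k) L = e at h
  cases h with
  | bot => simp [botT] at he
  | tup h1 h2 h3 h4 h5 h6 h7 =>
    simp only [Term.app.injEq, SSym.tup.injEq] at he
    obtain ⟨⟨rfl, rfl⟩, rfl⟩ := he
    exact ⟨_, _, _, _, rfl, rfl, h1, h2, h3, h4, h5, h6, h7⟩

theorem Slot_t {u : Term F V} {t t' e : STerm F V} (hlhs : ∀ ρ ∈ R, ∃ f ws, ρ.lhs = .app f ws)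
    (ih : ∀ a, sizeOf a < sizeOf t → ∀ b, SS R ar mOf a b → ∀ u, O R ar mOf u a → O R ar mOf u b)
    (hs : SS R ar mOf t t') (h : Slot R ar mOf u t e) : Slot R ar mOf u t' e := by
  cases h with
  | bot => exact .bot
  | tup h1 h2 h3 h4 h5 h6 h7 =>
    refine .tup h1 h2 h3 h4 h5 h6 ?_
    intro x b hb
    obtain ⟨a, ha, hab⟩ := pat_step hb hs
    have hO := h7 x a ha
    rcases hab with rfl | hab
    · exact hO
    · exact ih a ((inPat_size ha).2 (hlhs _ h1)) b hab _ hO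

theorem RI_head {g : SSym F V} {L : List (STerm F V)} {t' : STerm F V}
    (h : RI R ar mOf (.app g L) t') : g = .guard ∨ ∃ f, g = .orig f := by
  generalize he : Term.app g L = t at h
  cases h <;> simp only [guardT, Term.app.injEq] at he <;> simp [he.1]

theorem Slot_e {u : Term F V} {t e e' : STerm F V}
    (ih : ∀ a, sizeOf a < sizeOf e → ∀ b, SS R ar mOf a b → ∀ u, O R ar mOf u a → O R ar mOf u b)
    (hs : SS R ar mOf e e') (h : Slot R ar mOf u t e) : Slot R ar mOf u t e' := by
  cases h with
  | bot =>
    exfalso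
    rcases ctx_inv hs with h | ⟨g, args, n, a, a', he, ha, hss, rfl⟩
    · have := RI_head h; simp at this
    · simp [botT] at he
      rw [he.2] at ha; simp at ha
  | @tup _ _ ρ j σ e0 vs h1 h2 h3 h4 h5 h6 h7 =>
    rcases ctx_inv hs with h | ⟨g, args, n, a, a', he, ha, hss, rfl⟩
    · have := RI_head h; simp at this
    · simp only [Term.app.injEq] at he
      obtain ⟨rfl, rfl⟩ := he
      have hsz : sizeOf a < sizeOf (Term.app (SSym.tup ρ (j+1)) (e0 :: vs)) := by
        have := sizeOf_getElem? ha
        simp only [Term.app.sizeOf_spec]; omega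
      have hO := ih a hsz a' hss
      cases n with
      | zero =>
        simp at ha
        subst ha
        exact .tup h1 h2 h3 h4 (fun c hc => hO _ (h5 c hc)) h6 h7
      | succ n =>
        simp at ha
        refine .tup h1 h2 h3 h4 h5 ?_ h7
        intro i v e hv he
        by_cases hn : n = i
        · subst hn
          have hl := (List.getElem?_eq_some_iff.1 ha).1
          simp [List.getElem?_set, hl] at he
          subst he
          exact hO _ (h6 _ _ _ hv ha)
        · rw [List.getElem?_set, if_neg hn] at he
          exact h6 _ _ _ hv he

/-- data extracted from a slot -/
theorem early_O {ρ : CRule F V} {j : ℕ} {σ : V → Term F V} {τ : WVar V → STerm F V} {t : STerm F V}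
    (hw : ρ.lhs.WF ar)
    (hM : Mt mOf (fun x => τ (Sum.inl x)) ρ.lhs t)
    (h6 : ∀ (i : ℕ) v e, (Vlist ρ (j+1))[i]? = some v →
      ((Vlist ρ (j+1)).map (fun v => τ (Sum.inl v)))[i]? = some e → O R ar mOf (σ v) e)
    (h7 : ∀ x b, InPat ar ρ.lhs t x b → O R ar mOf (σ x) b) {x : V} (hx : Early ρ j x) :
    O R ar mOf (σ x) (τ (Sum.inl x)) := by
  rcases hx with hx | hx
  · exact h7 _ _ (Mt_inPat hw hM hx)
  · obtain ⟨i, hi⟩ := List.mem_iff_getElem?.1 (mem_Vlist.2 hx)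
    exact h6 i x _ hi (by simp [hi])

theorem O_guard_inv {u : Term F V} {t : STerm F V} (h : O R ar mOf u (guardT t)) :
    O R ar mOf u t := by
  generalize he : guardT t = t' at h
  cases h with
  | guard h => simp [guardT] at he; subst he; exact h
  | var h => simp [guardT] at he
  | orig => simp [guardT] at he

theorem set_orig {u : Term F V} {f : F} {us : List (Term F V)} {args : List (STerm F V)} {n : ℕ} {e}
    (hn : ar f ≤ n)
    (hs : SS R ar mOf (.app (.orig f) args) (.app (.orig f) (args.set n e)))
    (hlhs : ∀ ρ ∈ R, ∃ f ws, ρ.lhs = .app f ws)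
    (ih : ∀ a, sizeOf a < sizeOf (Term.app (SSym.orig f) args) →
      ∀ b, SS R ar mOf a b → ∀ u, O R ar mOf u a → O R ar mOf u b)
    (g1 : us.length = ar f) (g2 : args.length = ar f + mOf f) (g3 : RedStar R u (.app f us))
    (g4 : ∀ (i : ℕ) a b, us[i]? = some a → args[i]? = some b → O R ar mOf a b)
    (g5 : ∀ (q : ℕ) e, ar f ≤ q → args[q]? = some e → Slot R ar mOf u (.app (.orig f) args) e)
    (he : Slot R ar mOf u (.app (.orig f) args) e) :
    O R ar mOf u (.app (.orig f) (args.set n e)) := by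
  refine .orig g1 (by simpa using g2) g3 ?_ ?_
  · intro i a b ha hb
    have := (List.getElem?_eq_some_iff.1 ha).1
    rw [List.getElem?_set, if_neg (by omega)] at hb
    exact g4 i a b ha hb
  · intro q e' hq he'
    refine Slot_t hlhs ih hs ?_
    rw [List.getElem?_set] at he'
    split_ifs at he' with h1
    · cases he'; exact he
    · exact g5 q e' hq he'

theorem preserve (hS : GoodSetup R ar mOf idx) (hD : IsDCTRS R) (hW : IsWLL R) (hU : IsUWLL R) :
    ∀ (N : ℕ) (t : STerm F V), sizeOf t < N → ∀ t', SS R ar mOf t t' →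
      ∀ u, O R ar mOf u t → O R ar mOf u t' := by
  classical
  obtain ⟨hwf, hlhs, -, -, -⟩ := hS
  intro N
  induction N with
  | zero => intro t h; omega
  | succ N IH =>
  intro t ht t' hs u hO
  have ih : ∀ a, sizeOf a < sizeOf t → ∀ b, SS R ar mOf a b → ∀ u, O R ar mOf u a → O R ar mOf u b :=
    fun a ha => IH a (by omega)
  clear IH ht
  rcases ctx_inv hs with h | ⟨g, args, n, s, s', rfl, hn, hss, rfl⟩
  · cases h with
    | @uncond ρ τ f args hρ hc hM =>
      obtain ⟨σ, h1, h2, h3⟩ := matching (fun x => x ∈ ρ.rhs.varList) (hwf ρ hρ).1 hM hO (by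
        intro x hx
        have := hW ρ hρ x (by simpa [CRule.srcs, hc, seqCount] using count_pos.2 hx)
        simp [CRule.pats, hc, seqCount] at this
        omega)
      refine .guard (O_back (h1.trans (red_rule hρ σ (by simp [hc]))) ?_)
      refine O_bar (hwf ρ hρ).2.1 (fun x hx => h2 x ?_ hx)
      have := rhs_early hD hρ hx
      rw [hc] at this
      rcases this with h | ⟨i, hi, _⟩
      · exact h
      · simp at hi
    | @start ρ τ f args n c hρ hM hn hc =>
      have hl := (List.getElem?_eq_some_iff.1 hc).1
      obtain ⟨σ, h1, h2, h3⟩ := matching (fun _ => True) (hwf ρ hρ).1 hM hO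
        (fun x _ => lin_lhs hU hρ hl)
      cases hO with
      | orig g1 g2 g3 g4 g5 =>
      refine set_orig hn hs hlhs ih g1 g2 g3 g4 g5 ?_
      refine .tup (σ := σ) (j := 0) hρ hl h1 (by intro i hi; omega) ?_ ?_ ?_
      · intro c' hc'
        rw [hc] at hc'; cases hc'
        refine .guard (O_bar ((hwf ρ hρ).2.2 c (List.mem_of_getElem? hc)).1 (fun x hx => ?_))
        rcases det_early hD hρ hc hx with h | ⟨i, hi, _⟩
        · exact h2 x h trivial
        · omega
      · intro i v e hv he; simp at he
      · intro x b hb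
        rw [inPat_Mt hb hM]
        exact h2 x (inPat_mem hb) trivial
    | @mid ρ τ f args n j c d E hρ hM hn hc hd hE hsl =>
      have hl := (List.getElem?_eq_some_iff.1 hd).1
      cases hO with
      | orig g1 g2 g3 g4 g5 =>
      refine set_orig hn hs hlhs ih g1 g2 g3 g4 g5 ?_
      obtain ⟨j', σ0, e0, vs, hj, hL, -, -, k3, k4, k5, k6, k7⟩ := Slot_inv (g5 n _ hn hsl)
      obtain rfl : j = j' := by omega
      obtain ⟨rfl, rfl⟩ := List.cons.inj hL
      have hc2 := ((hwf ρ hρ).2.2 c (List.mem_of_getElem? hc)).2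
      have hlin := fun x hx => lin_mid hU hρ hl hc (x := x) hx
      obtain ⟨σ1, h1, h2, -⟩ := matching (fun _ => True) hc2 hE (O_guard_inv (k5 c hc)) (by
        intro x _
        by_cases hx : x ∈ c.2.varList
        · exact (hlin x hx).1
        · have := mt count_pos.1 hx
          omega)
      have hEO := fun x hx => early_O (hwf ρ hρ).1 hM k6 k7 (x := x) hx
      let σ : V → Term F V := fun x => if x ∈ c.2.varList then σ1 x else σ0 x
      have hσ0 : ∀ x, Early ρ j x → σ x = σ0 x := by
        intro x hx
        simp only [σ]
        rw [if_neg (fun h => (hlin x h).2 hx)]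
      have hσ1 : ∀ x ∈ c.2.varList, σ x = σ1 x := by
        intro x hx
        simp only [σ]; rw [if_pos hx]
      have hcsrc : ∀ i ≤ j, ∀ c', ρ.conds[i]? = some c' → c'.1.subst σ = c'.1.subst σ0 :=
        fun i hi c' hc' => subst_congr (fun x hx => hσ0 x ((det_early hD hρ hc' hx).mono hi))
      have hOall : ∀ x, Early ρ (j+1) x → O R ar mOf (σ x) (τ (Sum.inl x)) := by
        intro x hx
        rcases Early_succ hc hx with h | h
        · rw [hσ0 x h]; exact hEO x h
        · rw [hσ1 x h]; exact h2 x h trivial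
      refine .tup (σ := σ) (j := j+1) hρ hl ?_ ?_ ?_ ?_ ?_
      · rw [subst_congr (fun x hx => hσ0 x (.inl hx))]; exact k3
      · intro i hi c' hc'
        rw [hcsrc i (by omega) c' hc']
        rcases Nat.lt_succ_iff_lt_or_eq.1 hi with hi | rfl
        · rw [subst_congr (t := c'.2) (fun x hx => hσ0 x (.inr ⟨i, hi, c', hc', hx⟩))]
          exact k4 i hi c' hc'
        · rw [hc] at hc'; cases hc'
          rw [subst_congr hσ1]
          exact h1
      · intro d' hd'
        rw [hd] at hd'; cases hd'
        exact .guard (O_bar ((hwf ρ hρ).2.2 d (List.mem_of_getElem? hd)).1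
          (fun x hx => hOall x (det_early hD hρ hd hx)))
      · intro i v e hv he
        rw [List.getElem?_map, hv] at he
        cases he
        exact hOall v (.inr (mem_Vlist.1 (List.mem_of_getElem? hv)))
      · intro x b hb
        rw [inPat_Mt hb hM]
        exact hOall x (.inl (inPat_mem hb))
    | @fin ρ τ f args n j c E hρ hM hn hc hl hE hsl =>
      cases hO with
      | orig g1 g2 g3 g4 g5 =>
      obtain ⟨j', σ0, e0, vs, hj, hL, -, -, k3, k4, k5, k6, k7⟩ := Slot_inv (g5 n _ hn hsl)
      obtain rfl : j = j' := by omega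
      obtain ⟨rfl, rfl⟩ := List.cons.inj hL
      have hc2 := ((hwf ρ hρ).2.2 c (List.mem_of_getElem? hc)).2
      have hlin := fun x hx => lin_fin hU hρ hl hc (x := x) hx
      obtain ⟨σ1, h1, h2, h3⟩ := matching (fun x => x ∈ ρ.rhs.varList) hc2 hE
        (O_guard_inv (k5 c hc)) (fun x hx => (hlin x hx).1)
      have hEO := fun x hx => early_O (hwf ρ hρ).1 hM k6 k7 (x := x) hx
      let σ : V → Term F V := fun x => if x ∈ c.2.varList then σ1 x else σ0 x
      have hσ1 : ∀ x ∈ c.2.varList, σ x = σ1 x := by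
        intro x hx
        simp only [σ]; rw [if_pos hx]
      have hσ2 : ∀ x, x ∉ c.2.varList → σ x = σ0 x := by
        intro x hx
        simp only [σ]; rw [if_neg hx]
      have hred : ∀ x, Early ρ j x → RedStar R (σ0 x) (σ x) := by
        intro x hx
        by_cases hxc : x ∈ c.2.varList
        · have hr : x ∉ ρ.rhs.varList := fun hr => (hlin x hr).2 hxc hx
          rw [hσ1 x hxc, h3 x hr]
          obtain ⟨v, hv1, hv2⟩ := O_hat (hEO x hx)
          simpa [hv1] using hv2
        · rw [hσ2 x hxc]; exact .refl
      refine .guard (O_back ((k3.trans (red_subst (fun x hx => hred x (.inl hx)))).trans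
        (red_rule hρ σ ?_)) ?_)
      · intro c' hc'
        obtain ⟨i, hi⟩ := List.mem_iff_getElem?.1 hc'
        have hil := (List.getElem?_eq_some_iff.1 hi).1
        have : c'.1.subst σ = c'.1.subst σ0 := subst_congr (fun x hx =>
          hσ2 x (wll_src hD hW hρ (by omega) hi hc hx))
        rw [this]
        rcases Nat.lt_succ_iff_lt_or_eq.1 (by omega : i < j + 1) with hij | rfl
        · exact (k4 i hij c' hi).trans (red_subst (fun x hx => hred x (.inr ⟨i, hij, c', hi, hx⟩)))
        · rw [hc] at hi; cases hi
          rw [subst_congr hσ1]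
          exact h1
      · refine O_bar (hwf ρ hρ).2.1 (fun x hx => ?_)
        by_cases hxc : x ∈ c.2.varList
        · rw [hσ1 x hxc]; exact h2 x hxc hx
        · rw [hσ2 x hxc]
          have := rhs_early hD hρ hx
          rw [hl] at this
          exact hEO x ((Early_succ hc this).resolve_right hxc)
    | guard => exact O_guard_inv hO
    | @shift f args i a hi ha =>
      cases hO with
      | orig g1 g2 g3 g4 g5 =>
      refine .guard (.orig g1 (by simp [g2]) g3 ?_ ?_)
      · intro k b c hb hc
        have hk := (List.getElem?_eq_some_iff.1 hb).1
        rw [List.getElem?_append_left (by simp; omega), List.getElem?_set] at hc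
        split_ifs at hc with h1 h2
        · subst h1; cases hc
          exact O_guard_inv (g4 _ _ _ hb ha)
        · rw [List.getElem?_take_of_lt (by omega)] at hc
          exact g4 _ _ _ hb hc
      · intro q e hq he
        rw [List.getElem?_append_right (by simp; omega)] at he
        exact slot_bot_of_replicate (List.mem_of_getElem? he)
  · have hsz : sizeOf s < sizeOf (Term.app g args) := by
      have := sizeOf_getElem? hn
      simp only [Term.app.sizeOf_spec]; omega
    cases hO with
    | @guard _ a h =>
      cases n with
      | zero =>
        simp at hn
        subst hn
        exact .guard (ih _ hsz _ hss _ h)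
      | succ n => simp at hn
    | @orig _ f us _ g1 g2 g3 g4 g5 =>
      by_cases hnf : ar f ≤ n
      · refine set_orig hnf hs hlhs ih g1 g2 g3 g4 g5 ?_
        exact Slot_e (fun a ha => ih a (by omega)) hss (g5 n _ hnf hn)
      · refine .orig g1 (by simpa using g2) g3 ?_ ?_
        · intro i a b ha hb
          rw [List.getElem?_set] at hb
          split_ifs at hb with h1 h2
          · subst h1; cases hb
            exact ih _ hsz _ hss _ (g4 _ _ _ ha hn)
          · exact g4 i a b ha hb
        · intro q e' hq he'
          rw [List.getElem?_set, if_neg (by omega)] at he'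
          exact Slot_t hlhs ih hs (g5 q e' hq he')

theorem main (hS : GoodSetup R ar mOf idx) (hD : IsDCTRS R)
    (hW : IsWLL R) (hU : IsUWLL R)
    (s : Term F V) (hs : s.WF ar) (t : STerm F V)
    (h : RedStar (SRSys R ar mOf idx) (guardT (barT mOf s)) t) : O R ar mOf s t := by
  induction h with
  | refl =>
    have h1 : O R ar mOf (s.subst Term.var) ((barT mOf s).subst Term.var) :=
      O_bar hs (fun x _ => .var .refl)
    rw [subst_id, subst_id] at h1
    exact .guard h1
  | tail _ h ih =>
    obtain ⟨n, hn⟩ := h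
    cases n with
    | zero => exact hn.elim
    | succ n =>
      exact preserve hS hD hW hU _ _ (Nat.lt_succ_self _) _
        (ctx_mono (fun a b hab => root_RI hS hab) hn) _ ih

end
end SRS

/-- **Soundness of the SR transformation for WLL and `U`-WLL DCTRSs.**
For every term `s ∈ T(F,V)` and every term `t ∈ T(F̄,V)`, if
`⟨s̄⟩ →*_{SR(R)} t`, then `s →*_R t̂` whenever the backtranslation `t̂` is
defined. -/
theorem SR_sound_for_WLL_UWLL {F V : Type} [DecidableEq V]
    (R : CTRS F V) (ar mOf : F → ℕ) (idx : CRule F V → ℕ)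
    (hS : GoodSetup R ar mOf idx) (hD : IsDCTRS R)
    (hW : IsWLL R) (hU : IsUWLL R)
    (s : Term F V) (hs : s.WF ar) (t : STerm F V)
    (h : RedStar (SRSys R ar mOf idx) (guardT (barT mOf s)) t) :
    ∀ u : Term F V, hatT ar t = some u → RedStar R s u := by
  intro u hu
  obtain ⟨v, hv, hr⟩ := SRS.O_hat (SRS.main hS hD hW hU s hs t h)
  rw [hu] at hv
  cases hv
  exact hr
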